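/- Mutual coherence is bounded by absolute coherence: For all states ρ_S on ℂ^{d_S} and ρ_R on ℂ^{d_R}, M(ρ_S, ρ_R) ≤ min{C(ρ_S), C(ρ_R)}, where C(ρ_S) is the absolute coherence with respect to τ_{S*} and C(ρ_R) with respect to τ_{R*}. In particular, if ρ_R (or ρ_S) is invariant (τ_{R*}(ρ_R) = ρ_R, resp. τ_{S*}(ρ_S) = ρ_S), then M(ρ_S, ρ_R) = 0. -/

import Mathlib

open Matrix
open scoped Kronecker ComplexOrder

noncomputable section

/-- The total-number spectral projection `P_N = ∑_{n+m=N} P^S_n ⊗ P^R_m`. -/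
def jointProj {dS dR : ℕ} (SS SR : Finset ℤ)
    (PS : ℤ → Matrix (Fin dS) (Fin dS) ℂ) (PR : ℤ → Matrix (Fin dR) (Fin dR) ℂ)
    (N : ℤ) : Matrix (Fin dS × Fin dR) (Fin dS × Fin dR) ℂ :=
  ∑ p ∈ (SS ×ˢ SR).filter (fun p => p.1 + p.2 = N), PS p.1 ⊗ₖ PR p.2

/-- The global dephasing map `τ_T(C) = ∑_N P_N C P_N`. -/
def tauTotal {dS dR : ℕ} (SS SR : Finset ℤ)
    (PS : ℤ → Matrix (Fin dS) (Fin dS) ℂ) (PR : ℤ → Matrix (Fin dR) (Fin dR) ℂ)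
    (C : Matrix (Fin dS × Fin dR) (Fin dS × Fin dR) ℂ) :
    Matrix (Fin dS × Fin dR) (Fin dS × Fin dR) ℂ :=
  ∑ N ∈ (SS ×ˢ SR).image (fun p => p.1 + p.2),
    jointProj SS SR PS PR N * C * jointProj SS SR PS PR N

/-- The local dephasing map `τ(A) = ∑ₙ Pₙ A Pₙ` (also `τ_*` on states). -/
def dephase {d : ℕ} (S : Finset ℤ) (P : ℤ → Matrix (Fin d) (Fin d) ℂ)
    (A : Matrix (Fin d) (Fin d) ℂ) : Matrix (Fin d) (Fin d) ℂ :=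
  ∑ n ∈ S, P n * A * P n

/-- Absolute coherence: `C(ρ) = sup_E |tr(ρE) − tr(τ_*(ρ)E)|`, supremum over effects. -/
def absCoherence {d : ℕ} (S : Finset ℤ) (P : ℤ → Matrix (Fin d) (Fin d) ℂ)
    (ρ : Matrix (Fin d) (Fin d) ℂ) : ℝ :=
  sSup {x : ℝ | ∃ E : Matrix (Fin d) (Fin d) ℂ, E.PosSemidef ∧ (1 - E).PosSemidef ∧
    x = ‖(ρ * E).trace - (dephase S P ρ * E).trace‖}

/-- Mutual coherence: `M(ρ_S,ρ_R) = sup_E |tr((τ_{S*}(ρ_S)⊗ρ_R − ρ_S⊗ρ_R)E)|`, supremum over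
invariant effects `E` (`τ_T(E) = E`). -/
def mutCoherence {dS dR : ℕ} (SS SR : Finset ℤ)
    (PS : ℤ → Matrix (Fin dS) (Fin dS) ℂ) (PR : ℤ → Matrix (Fin dR) (Fin dR) ℂ)
    (ρS : Matrix (Fin dS) (Fin dS) ℂ) (ρR : Matrix (Fin dR) (Fin dR) ℂ) : ℝ :=
  sSup {x : ℝ | ∃ E : Matrix (Fin dS × Fin dR) (Fin dS × Fin dR) ℂ,
    E.PosSemidef ∧ (1 - E).PosSemidef ∧ tauTotal SS SR PS PR E = E ∧
    x = ‖((dephase SS PS ρS ⊗ₖ ρR - ρS ⊗ₖ ρR) * E).trace‖}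

theorem aux_trace_vec {n : Type*} [Fintype n] (v : n → ℂ) (B : Matrix n n ℂ) :
    (vecMulVec v (star v) * B).trace = star v ⬝ᵥ (B *ᵥ v) := by
  rw [vecMulVec_mul, trace_vecMulVec, dotProduct_comm, dotProduct_mulVec]

theorem aux_trace_nonneg {n : Type*} [Fintype n] {A B : Matrix n n ℂ}
    (hA : A.PosSemidef) (hB : B.PosSemidef) : 0 ≤ (A * B).trace := by
  obtain ⟨m, v, rfl⟩ := Matrix.posSemidef_iff_eq_sum_vecMulVec.1 hA
  rw [Finset.sum_mul, trace_sum]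
  refine Finset.sum_nonneg fun i _ => ?_
  rw [aux_trace_vec]
  exact hB.dotProduct_mulVec_nonneg _

/-- Conditional expectation of `E` with respect to the state `ρ` of the second factor. -/
def auxPart {n m : Type*} [Fintype n] [Fintype m] (ρ : Matrix m m ℂ)
    (E : Matrix (n × m) (n × m) ℂ) : Matrix n n ℂ :=
  Matrix.of fun i j => ∑ k, ∑ l, ρ k l * E (i, l) (j, k)

theorem auxPart_trace {n m : Type*} [Fintype n] [Fintype m] (A : Matrix n n ℂ)
    (ρ : Matrix m m ℂ) (E : Matrix (n × m) (n × m) ℂ) :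
    ((A ⊗ₖ ρ) * E).trace = (A * auxPart ρ E).trace := by
  simp only [trace, diag, mul_apply, Fintype.sum_prod_type, kronecker_apply, auxPart, of_apply,
    Finset.mul_sum]
  refine Finset.sum_congr rfl fun j _ => ?_
  rw [Finset.sum_comm]
  refine Finset.sum_congr rfl fun i _ => Finset.sum_congr rfl fun k _ =>
    Finset.sum_congr rfl fun l _ => ?_
  ring

theorem auxPart_posSemidef {n m : Type*} [Fintype n] [Fintype m]
    {ρ : Matrix m m ℂ} (hρ : ρ.PosSemidef) {E : Matrix (n × m) (n × m) ℂ} (hE : E.PosSemidef) :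
    (auxPart ρ E).PosSemidef := by
  refine PosSemidef.of_dotProduct_mulVec_nonneg ?_ fun x => ?_
  · ext i j
    simp only [conjTranspose_apply, auxPart, of_apply, star_sum, star_mul']
    rw [Finset.sum_comm]
    refine Finset.sum_congr rfl fun k _ => Finset.sum_congr rfl fun l _ => ?_
    rw [hρ.isHermitian.apply, hE.isHermitian.apply]
  · rw [← aux_trace_vec, ← auxPart_trace]
    exact aux_trace_nonneg ((posSemidef_vecMulVec_self_star x).kronecker hρ) hE

theorem auxPart_one_sub {n m : Type*} [Fintype n] [Fintype m] [DecidableEq n] [DecidableEq m]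
    {ρ : Matrix m m ℂ} (hρ : ρ.trace = 1) (E : Matrix (n × m) (n × m) ℂ) :
    auxPart ρ (1 - E) = 1 - auxPart ρ E := by
  ext i j
  simp only [auxPart, of_apply, Matrix.sub_apply, mul_sub, Finset.sum_sub_distrib]
  congr 1
  by_cases h : i = j
  · subst h
    simpa [one_apply, trace] using hρ
  · simp [one_apply, h]

theorem aux_dephase_posSemidef {d : ℕ} (S : Finset ℤ) (P : ℤ → Matrix (Fin d) (Fin d) ℂ)
    (hP : ∀ n, (P n).IsHermitian) {ρ : Matrix (Fin d) (Fin d) ℂ} (hρ : ρ.PosSemidef) :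
    (dephase S P ρ).PosSemidef := by
  refine posSemidef_sum _ fun n _ => ?_
  have := hρ.mul_mul_conjTranspose_same (P n)
  rwa [(hP n).eq] at this

theorem aux_trace_bound {n : Type*} [Fintype n] [DecidableEq n] {A E : Matrix n n ℂ}
    (hA : A.PosSemidef) (hE : E.PosSemidef) (hE' : (1 - E).PosSemidef) :
    ‖(A * E).trace‖ ≤ ‖A.trace‖ := by
  have h1 := aux_trace_nonneg hA hE
  have h2 := aux_trace_nonneg hA hE'
  rw [mul_sub, mul_one, trace_sub, sub_nonneg] at h2
  exact CStarAlgebra.norm_le_norm_of_nonneg_of_le h1 h2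

theorem aux_le_abs {d : ℕ} (S : Finset ℤ) (P : ℤ → Matrix (Fin d) (Fin d) ℂ)
    (hP : ∀ n, (P n).IsHermitian) {ρ E : Matrix (Fin d) (Fin d) ℂ} (hρ : ρ.PosSemidef)
    (hE : E.PosSemidef) (hE' : (1 - E).PosSemidef) :
    ‖(ρ * E).trace - (dephase S P ρ * E).trace‖ ≤ absCoherence S P ρ := by
  refine le_csSup ⟨‖ρ.trace‖ + ‖(dephase S P ρ).trace‖, ?_⟩ ⟨E, hE, hE', rfl⟩
  rintro x ⟨F, hF, hF', rfl⟩
  exact (norm_sub_le _ _).trans (add_le_add (aux_trace_bound hρ hF hF')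
    (aux_trace_bound (aux_dephase_posSemidef S P hP hρ) hF hF'))

theorem aux_abs_nonneg {d : ℕ} (S : Finset ℤ) (P : ℤ → Matrix (Fin d) (Fin d) ℂ)
    (ρ : Matrix (Fin d) (Fin d) ℂ) : 0 ≤ absCoherence S P ρ := by
  refine Real.sSup_nonneg ?_
  rintro x ⟨F, hF, hF', rfl⟩
  exact norm_nonneg _

theorem aux_abs_eq_zero {d : ℕ} (S : Finset ℤ) (P : ℤ → Matrix (Fin d) (Fin d) ℂ)
    (ρ : Matrix (Fin d) (Fin d) ℂ) (h : dephase S P ρ = ρ) : absCoherence S P ρ = 0 := by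
  refine le_antisymm (Real.sSup_le ?_ le_rfl) (aux_abs_nonneg S P ρ)
  rintro x ⟨F, hF, hF', rfl⟩
  simp [h]

theorem aux_mut_nonneg {dS dR : ℕ} (SS SR : Finset ℤ)
    (PS : ℤ → Matrix (Fin dS) (Fin dS) ℂ) (PR : ℤ → Matrix (Fin dR) (Fin dR) ℂ)
    (ρS : Matrix (Fin dS) (Fin dS) ℂ) (ρR : Matrix (Fin dR) (Fin dR) ℂ) :
    0 ≤ mutCoherence SS SR PS PR ρS ρR := by
  refine Real.sSup_nonneg ?_
  rintro x ⟨F, hF, hF', _, rfl⟩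
  exact norm_nonneg _

theorem aux_block_zero {dS dR : ℕ} (SS SR : Finset ℤ)
    (PS : ℤ → Matrix (Fin dS) (Fin dS) ℂ) (PR : ℤ → Matrix (Fin dR) (Fin dR) ℂ)
    (hPSo : ∀ n m, n ≠ m → PS n * PS m = 0)
    (hPRo : ∀ n m, n ≠ m → PR n * PR m = 0)
    (E : Matrix (Fin dS × Fin dR) (Fin dS × Fin dR) ℂ) (hE : tauTotal SS SR PS PR E = E)
    (a b a' b' : ℤ) (hne : a + b ≠ a' + b') :
    (PS a ⊗ₖ PR b) * E * (PS a' ⊗ₖ PR b') = 0 := by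
  have hQ : ∀ p q : ℤ × ℤ, p ≠ q → (PS p.1 ⊗ₖ PR p.2) * (PS q.1 ⊗ₖ PR q.2) = 0 := by
    intro p q hpq
    rw [← mul_kronecker_mul]
    by_cases h1 : p.1 = q.1
    · rw [hPRo p.2 q.2 fun h2 => hpq (Prod.ext h1 h2), kronecker_zero]
    · rw [hPSo _ _ h1, zero_kronecker]
  have hl : ∀ N, a + b ≠ N → (PS a ⊗ₖ PR b) * jointProj SS SR PS PR N = 0 := by
    intro N hN
    rw [jointProj, Finset.mul_sum]
    refine Finset.sum_eq_zero fun q hq => hQ (a, b) q ?_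
    rintro rfl
    exact hN (Finset.mem_filter.1 hq).2
  have hr : ∀ N, a' + b' ≠ N → jointProj SS SR PS PR N * (PS a' ⊗ₖ PR b') = 0 := by
    intro N hN
    rw [jointProj, Finset.sum_mul]
    refine Finset.sum_eq_zero fun q hq => hQ q (a', b') ?_
    rintro rfl
    exact hN (Finset.mem_filter.1 hq).2
  rw [← hE, tauTotal, Finset.mul_sum, Finset.sum_mul]
  refine Finset.sum_eq_zero fun N _ => ?_
  by_cases h : a + b = N
  · rw [Matrix.mul_assoc, Matrix.mul_assoc, hr N (by rw [← h]; exact hne.symm)]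
    simp
  · rw [← Matrix.mul_assoc, ← Matrix.mul_assoc, hl N h]
    simp

theorem aux_kron_sum {n m : Type*} (S : Finset ℤ) (A : Matrix n n ℂ)
    (f : ℤ → Matrix m m ℂ) : A ⊗ₖ (∑ i ∈ S, f i) = ∑ i ∈ S, A ⊗ₖ f i := by
  ext ⟨i, k⟩ ⟨j, l⟩
  simp [kronecker_apply, Matrix.sum_apply, Finset.mul_sum]

theorem aux_sum_kron {n m : Type*} (S : Finset ℤ) (A : Matrix m m ℂ)
    (f : ℤ → Matrix n n ℂ) : (∑ i ∈ S, f i) ⊗ₖ A = ∑ i ∈ S, f i ⊗ₖ A := by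
  ext ⟨i, k⟩ ⟨j, l⟩
  simp [kronecker_apply, Matrix.sum_apply, Finset.sum_mul]

theorem aux_switch {dS dR : ℕ} (SS SR : Finset ℤ)
    (PS : ℤ → Matrix (Fin dS) (Fin dS) ℂ) (PR : ℤ → Matrix (Fin dR) (Fin dR) ℂ)
    (hPSo : ∀ n m, n ≠ m → PS n * PS m = 0) (hPSsum : ∑ n ∈ SS, PS n = 1)
    (hPRo : ∀ n m, n ≠ m → PR n * PR m = 0) (hPRsum : ∑ m ∈ SR, PR m = 1)
    (ρS : Matrix (Fin dS) (Fin dS) ℂ) (ρR : Matrix (Fin dR) (Fin dR) ℂ)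
    (E : Matrix (Fin dS × Fin dR) (Fin dS × Fin dR) ℂ) (hE : tauTotal SS SR PS PR E = E) :
    ((dephase SS PS ρS ⊗ₖ ρR) * E).trace = ((ρS ⊗ₖ dephase SR PR ρR) * E).trace := by
  have hz := aux_block_zero SS SR PS PR hPSo hPRo E hE
  have h1 : ∀ n, (PS n ⊗ₖ (1 : Matrix (Fin dR) (Fin dR) ℂ)) * E * (PS n ⊗ₖ 1)
      = ∑ m ∈ SR, (PS n ⊗ₖ PR m) * E * (PS n ⊗ₖ PR m) := by
    intro n
    rw [← hPRsum, aux_kron_sum, Finset.sum_mul, Finset.sum_mul]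
    refine Finset.sum_congr rfl fun m hm => ?_
    rw [Finset.mul_sum]
    exact Finset.sum_eq_single_of_mem m hm fun m' _ hne => hz _ _ _ _ (by omega)
  have h2 : ∀ m, ((1 : Matrix (Fin dS) (Fin dS) ℂ) ⊗ₖ PR m) * E * (1 ⊗ₖ PR m)
      = ∑ n ∈ SS, (PS n ⊗ₖ PR m) * E * (PS n ⊗ₖ PR m) := by
    intro m
    rw [← hPSsum, aux_sum_kron, Finset.sum_mul, Finset.sum_mul]
    refine Finset.sum_congr rfl fun n hn => ?_
    rw [Finset.mul_sum]
    exact Finset.sum_eq_single_of_mem n hn fun n' _ hne => hz _ _ _ _ (by omega)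
  have h3 : ((dephase SS PS ρS ⊗ₖ ρR) * E).trace = ((ρS ⊗ₖ ρR) *
      ∑ n ∈ SS, (PS n ⊗ₖ (1 : Matrix (Fin dR) (Fin dR) ℂ)) * E * (PS n ⊗ₖ 1)).trace := by
    rw [dephase, aux_sum_kron, Finset.sum_mul, Finset.mul_sum, trace_sum, trace_sum]
    refine Finset.sum_congr rfl fun n _ => ?_
    have : (PS n * ρS * PS n) ⊗ₖ ρR = (PS n ⊗ₖ 1) * (ρS ⊗ₖ ρR) * (PS n ⊗ₖ 1) := by
      simp [← mul_kronecker_mul]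
    rw [this, Matrix.mul_assoc, Matrix.mul_assoc, trace_mul_comm]
    simp only [Matrix.mul_assoc]
  have h4 : ((ρS ⊗ₖ dephase SR PR ρR) * E).trace = ((ρS ⊗ₖ ρR) *
      ∑ m ∈ SR, ((1 : Matrix (Fin dS) (Fin dS) ℂ) ⊗ₖ PR m) * E * (1 ⊗ₖ PR m)).trace := by
    rw [dephase, aux_kron_sum, Finset.sum_mul, Finset.mul_sum, trace_sum, trace_sum]
    refine Finset.sum_congr rfl fun n _ => ?_
    have : ρS ⊗ₖ (PR n * ρR * PR n) = (1 ⊗ₖ PR n) * (ρS ⊗ₖ ρR) * (1 ⊗ₖ PR n) := by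
      simp [← mul_kronecker_mul]
    rw [this, Matrix.mul_assoc, Matrix.mul_assoc, trace_mul_comm]
    simp only [Matrix.mul_assoc]
  rw [h3, h4, Finset.sum_congr rfl fun n _ => h1 n, Finset.sum_congr rfl fun n _ => h2 n,
    Finset.sum_comm]

theorem aux_swap_trace {n m : Type*} [Fintype n] [Fintype m] (A : Matrix n n ℂ)
    (B : Matrix m m ℂ) (E : Matrix (n × m) (n × m) ℂ) :
    ((A ⊗ₖ B) * E).trace = ((B ⊗ₖ A) * E.submatrix Prod.swap Prod.swap).trace := by
  simp only [trace, diag, mul_apply, Fintype.sum_prod_type, kronecker_apply, submatrix_apply,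
    Prod.swap_prod_mk]
  rw [Finset.sum_comm]
  refine Finset.sum_congr rfl fun j _ => Finset.sum_congr rfl fun i _ => ?_
  rw [Finset.sum_comm]
  refine Finset.sum_congr rfl fun k _ => Finset.sum_congr rfl fun l _ => ?_
  ring

theorem aux_mut_le_S {dS dR : ℕ} (SS SR : Finset ℤ)
    (PS : ℤ → Matrix (Fin dS) (Fin dS) ℂ) (PR : ℤ → Matrix (Fin dR) (Fin dR) ℂ)
    (hPSh : ∀ n, (PS n).IsHermitian)
    (ρS : Matrix (Fin dS) (Fin dS) ℂ) (hρS : ρS.PosSemidef)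
    (ρR : Matrix (Fin dR) (Fin dR) ℂ) (hρR : ρR.PosSemidef) (hρRtr : ρR.trace = 1) :
    mutCoherence SS SR PS PR ρS ρR ≤ absCoherence SS PS ρS := by
  refine Real.sSup_le ?_ (aux_abs_nonneg _ _ _)
  rintro x ⟨E, hE, hE', _, rfl⟩
  rw [sub_mul, trace_sub, norm_sub_rev, auxPart_trace, auxPart_trace]
  refine aux_le_abs SS PS hPSh hρS (auxPart_posSemidef hρR hE) ?_
  rw [← auxPart_one_sub hρRtr]
  exact auxPart_posSemidef hρR hE'

theorem aux_mut_le_R {dS dR : ℕ} (SS SR : Finset ℤ)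
    (PS : ℤ → Matrix (Fin dS) (Fin dS) ℂ) (PR : ℤ → Matrix (Fin dR) (Fin dR) ℂ)
    (hPSo : ∀ n m, n ≠ m → PS n * PS m = 0) (hPSsum : ∑ n ∈ SS, PS n = 1)
    (hPRh : ∀ n, (PR n).IsHermitian)
    (hPRo : ∀ n m, n ≠ m → PR n * PR m = 0) (hPRsum : ∑ m ∈ SR, PR m = 1)
    (ρS : Matrix (Fin dS) (Fin dS) ℂ) (hρS : ρS.PosSemidef) (hρStr : ρS.trace = 1)
    (ρR : Matrix (Fin dR) (Fin dR) ℂ) (hρR : ρR.PosSemidef) :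
    mutCoherence SS SR PS PR ρS ρR ≤ absCoherence SR PR ρR := by
  refine Real.sSup_le ?_ (aux_abs_nonneg _ _ _)
  rintro x ⟨E, hE, hE', hinv, rfl⟩
  rw [sub_mul, trace_sub, norm_sub_rev,
    aux_switch SS SR PS PR hPSo hPSsum hPRo hPRsum ρS ρR E hinv,
    aux_swap_trace, aux_swap_trace ρS, auxPart_trace, auxPart_trace]
  refine aux_le_abs SR PR hPRh hρR (auxPart_posSemidef hρS (hE.submatrix _)) ?_
  rw [← auxPart_one_sub hρStr]
  refine auxPart_posSemidef hρS ?_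
  have h := hE'.submatrix (Prod.swap : Fin dR × Fin dS → Fin dS × Fin dR)
  rw [submatrix_sub] at h
  have h1 : (1 : Matrix (Fin dS × Fin dR) (Fin dS × Fin dR) ℂ).submatrix Prod.swap Prod.swap
      = (1 : Matrix (Fin dR × Fin dS) (Fin dR × Fin dS) ℂ) :=
    submatrix_one _ Prod.swap_injective
  simpa [h1] using h

/-- **Mutual coherence is bounded by absolute coherence**:
`M(ρ_S, ρ_R) ≤ min{C(ρ_S), C(ρ_R)}`; in particular `M = 0` whenever either state is
invariant. -/
theorem mutCoherence_le_absCoherence {dS dR : ℕ}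
    (SS SR : Finset ℤ)
    (PS : ℤ → Matrix (Fin dS) (Fin dS) ℂ) (PR : ℤ → Matrix (Fin dR) (Fin dR) ℂ)
    (hPSh : ∀ n, (PS n).IsHermitian) (hPSi : ∀ n, PS n * PS n = PS n)
    (hPSo : ∀ n m, n ≠ m → PS n * PS m = 0)
    (hPSsupp : ∀ n, n ∉ SS → PS n = 0) (hPSsum : ∑ n ∈ SS, PS n = 1)
    (hPRh : ∀ m, (PR m).IsHermitian) (hPRi : ∀ m, PR m * PR m = PR m)
    (hPRo : ∀ n m, n ≠ m → PR n * PR m = 0)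
    (hPRsupp : ∀ m, m ∉ SR → PR m = 0) (hPRsum : ∑ m ∈ SR, PR m = 1)
    (ρS : Matrix (Fin dS) (Fin dS) ℂ) (hρS : ρS.PosSemidef) (hρStr : ρS.trace = 1)
    (ρR : Matrix (Fin dR) (Fin dR) ℂ) (hρR : ρR.PosSemidef) (hρRtr : ρR.trace = 1) :
    (mutCoherence SS SR PS PR ρS ρR
      ≤ min (absCoherence SS PS ρS) (absCoherence SR PR ρR)) ∧
    (dephase SR PR ρR = ρR → mutCoherence SS SR PS PR ρS ρR = 0) ∧
    (dephase SS PS ρS = ρS → mutCoherence SS SR PS PR ρS ρR = 0) := by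
  have hS := aux_mut_le_S SS SR PS PR hPSh ρS hρS ρR hρR hρRtr
  have hR := aux_mut_le_R SS SR PS PR hPSo hPSsum hPRh hPRo hPRsum ρS hρS hρStr ρR hρR
  have h0 := aux_mut_nonneg SS SR PS PR ρS ρR
  refine ⟨le_min hS hR, fun h => ?_, fun h => ?_⟩
  · rw [aux_abs_eq_zero SR PR ρR h] at hR
    exact le_antisymm hR h0
  · rw [aux_abs_eq_zero SS PS ρS h] at hS
    exact le_antisymm hS h0

end
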